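/- Let f : (0,∞) → ℝ be bounded and continuous. Then for every x > 0, the convolution ∫₀^∞ K(t,x,y) f(y) dy converges to f(x) as t → 0⁺, i.e. the diffusion kernel satisfies the initial condition K(0,x,y) = δ(x−y) in the sense of the fundamental solution. -/

import Mathlib

open Real MeasureTheory Filter Topology

/-- The spatially varying diffusion kernel on `(0,∞)`:
`K(t,x,y) = (πty)^(−1/2) · exp(−(x+y)/t) · cosh(2√(xy)/t)`. -/
noncomputable def diffusionKernel (t x y : ℝ) : ℝ :=
  (Real.pi * t * y) ^ (-(1 : ℝ) / 2) * Real.exp (-(x + y) / t) *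
    Real.cosh (2 * Real.sqrt (x * y) / t)

/-!
`K(t, x, ·)` is the density of the square of a Gaussian variable of mean `√x` and variance `t / 2`:
the two exponentials of the `cosh` are the contributions of the square roots `√y` and `-√y` of `y`.
Hence `∫ K(t, x, y) f(y) dy` is the mean of `f(u²)` under that Gaussian, which concentrates at `√x`
as `t → 0⁺`.
-/

open Set ProbabilityTheory
open scoped NNReal

section SquareSubstitution

theorem quasiMeasurePreserving_sq_restrict_Ioi :
    Measure.QuasiMeasurePreserving (fun u : ℝ ↦ u ^ 2) volume (volume.restrict (Ioi 0)) := by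
  refine ⟨by fun_prop, Measure.AbsolutelyContinuous.mk fun N hN hN_null ↦ ?_⟩
  rw [Measure.restrict_apply hN] at hN_null
  rw [Measure.map_apply (by fun_prop) hN]
  have sqrt_differentiableOn : DifferentiableOn ℝ sqrt (N ∩ Ioi 0) := fun y hy ↦
    (differentiableAt_id.sqrt hy.2.ne').differentiableWithinAt
  have sqrt_image_null : volume (sqrt '' (N ∩ Ioi 0)) = 0 :=
    addHaar_image_eq_zero_of_differentiableOn_of_addHaar_eq_zero _ sqrt_differentiableOn hN_null
  have neg_sqrt_image_null : volume ((fun y ↦ -√y) '' (N ∩ Ioi 0)) = 0 :=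
    addHaar_image_eq_zero_of_differentiableOn_of_addHaar_eq_zero _ sqrt_differentiableOn.neg hN_null
  refine measure_mono_null (fun u hu ↦ ?_) (measure_union_null (measure_union_null
    sqrt_image_null neg_sqrt_image_null) (measure_singleton (0 : ℝ)))
  rcases lt_trichotomy u 0 with hneg | hzero | hpos
  · exact .inl (.inr ⟨u ^ 2, ⟨hu, sq_pos_of_neg hneg⟩, by simp [sqrt_sq_eq_abs, abs_of_neg hneg]⟩)
  · exact .inr hzero
  · exact .inl (.inl ⟨u ^ 2, ⟨hu, sq_pos_of_pos hpos⟩, sqrt_sq hpos.le⟩)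

theorem tendsto_sq_nhdsNE_sqrt {x : ℝ} (hx : 0 ≤ x) :
    Tendsto (fun u : ℝ ↦ u ^ 2) (𝓝[≠] √x) (𝓝[Ioi 0] x) := by
  refine tendsto_nhdsWithin_iff.2 ⟨?_, ?_⟩
  · have hcont : Continuous fun u : ℝ ↦ u ^ 2 := by fun_prop
    simpa only [sq_sqrt hx] using (hcont.tendsto √x).mono_left nhdsWithin_le_nhds
  · filter_upwards [nhdsNE_le_cofinite √x (eventually_cofinite_ne 0)] with u hu
    exact sq_pos_of_ne_zero hu

variable {E : Type*} [NormedAddCommGroup E] [NormedSpace ℝ E] {g : ℝ → E}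

theorem integral_eq_integral_Ioi_add_comp_neg (hg : Integrable g) :
    ∫ u, g u = ∫ u in Ioi 0, (g u + g (-u)) := by
  rw [integral_add hg.integrableOn hg.comp_neg.integrableOn, integral_comp_neg_Ioi, neg_zero,
    add_comm, intervalIntegral.integral_Iic_add_Ioi hg.integrableOn hg.integrableOn]

theorem integral_eq_integral_Ioi_sqrt (hg : Integrable g) :
    ∫ u, g u = ∫ y in Ioi 0, (2 * √y)⁻¹ • (g √y + g (-√y)) := by
  rw [integral_eq_integral_Ioi_add_comp_neg hg, ← integral_comp_rpow_Ioi_of_pos one_half_pos]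
  refine setIntegral_congr_fun measurableSet_Ioi fun y hy ↦ ?_
  have sqrt_deriv : 1 / 2 * y ^ ((1 : ℝ) / 2 - 1) = (2 * √y)⁻¹ := by
    rw [show (1 : ℝ) / 2 - 1 = -(1 / 2) by norm_num, rpow_neg hy.le, ← sqrt_eq_rpow, mul_inv,
      one_div]
  simp only [sqrt_deriv, ← sqrt_eq_rpow]

end SquareSubstitution

section GaussianConcentration

theorem map_affine_gaussianReal_zero_one (μ : ℝ) (v : ℝ≥0) :
    (gaussianReal 0 1).map (fun z ↦ μ + √v * z) = gaussianReal μ v := by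
  have hcomp : (fun z ↦ μ + √v * z) = (μ + ·) ∘ (√v * ·) := rfl
  rw [hcomp, ← Measure.map_map (by fun_prop) (by fun_prop), gaussianReal_map_const_mul,
    gaussianReal_map_const_add, mul_zero, zero_add, mul_one]
  congr 1
  exact NNReal.eq (sq_sqrt v.2)

theorem quasiMeasurePreserving_affine_gaussianReal (μ : ℝ) {v : ℝ≥0} (hv : v ≠ 0) :
    Measure.QuasiMeasurePreserving (fun z ↦ μ + √v * z) (gaussianReal 0 1) volume :=
  ⟨by fun_prop, map_affine_gaussianReal_zero_one μ v ▸ gaussianReal_absolutelyContinuous μ hv⟩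

theorem tendsto_affine_sqrt_nhdsNE (μ : ℝ) {z : ℝ} (hz : z ≠ 0) :
    Tendsto (fun v : ℝ≥0 ↦ μ + √v * z) (𝓝[≠] 0) (𝓝[≠] μ) := by
  refine tendsto_nhdsWithin_iff.2 ⟨?_, ?_⟩
  · have hcont : Continuous fun v : ℝ≥0 ↦ μ + √v * z := by fun_prop
    simpa using (hcont.tendsto 0).mono_left nhdsWithin_le_nhds
  · filter_upwards [self_mem_nhdsWithin] with v hv
    simpa [hz] using hv

theorem tendsto_integral_gaussianReal {E : Type*} [NormedAddCommGroup E] [NormedSpace ℝ E]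
    [CompleteSpace E] {g : ℝ → E} {C μ : ℝ} {l : E} (hmeas : AEStronglyMeasurable g)
    (hbdd : ∀ᵐ u, ‖g u‖ ≤ C) (hlim : Tendsto g (𝓝[≠] μ) (𝓝 l)) :
    Tendsto (fun v : ℝ≥0 ↦ ∫ u, g u ∂gaussianReal μ v) (𝓝[≠] 0) (𝓝 l) := by
  have standardize : ∀ᶠ v : ℝ≥0 in 𝓝[≠] 0,
      ∫ z, g (μ + √v * z) ∂gaussianReal 0 1 = ∫ u, g u ∂gaussianReal μ v := by
    filter_upwards [self_mem_nhdsWithin] with v hv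
    rw [← map_affine_gaussianReal_zero_one μ v, integral_map (by fun_prop)]
    exact hmeas.mono_ac (quasiMeasurePreserving_affine_gaussianReal μ hv).absolutelyContinuous
  refine Tendsto.congr' standardize ?_
  rw [show l = ∫ _, l ∂gaussianReal 0 1 by simp]
  refine tendsto_integral_filter_of_dominated_convergence (fun _ ↦ C) ?_ ?_
    (integrable_const C) ?_
  · filter_upwards [self_mem_nhdsWithin] with v hv
    exact hmeas.comp_quasiMeasurePreserving (quasiMeasurePreserving_affine_gaussianReal μ hv)
  · filter_upwards [self_mem_nhdsWithin] with v hv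
    exact (quasiMeasurePreserving_affine_gaussianReal μ hv).ae hbdd
  · have : NullSingletonClass (gaussianReal 0 1) := nullSingletonClass_gaussianReal one_ne_zero
    filter_upwards [Measure.ae_ne (gaussianReal 0 1) 0] with z hz
    exact hlim.comp (tendsto_affine_sqrt_nhdsNE μ hz)

end GaussianConcentration

theorem diffusionKernel_eq_gaussianPDFReal {t : ℝ≥0} {x y : ℝ} (hx : 0 ≤ x) (hy : 0 ≤ y) :
    diffusionKernel t x y = (2 * √y)⁻¹ *
      (gaussianPDFReal √x (t / 2) √y + gaussianPDFReal √x (t / 2) (-√y)) := by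
  have prefactor : (π * t * y) ^ (-(1 : ℝ) / 2) = (√(π * t))⁻¹ * (√y)⁻¹ := by
    rw [neg_div, rpow_neg (by positivity), ← sqrt_eq_rpow, sqrt_mul (by positivity), mul_inv]
  have two_mul_variance : 2 * ((t / 2 : ℝ≥0) : ℝ) = t := by push_cast; ring
  have pdf_constant : √(2 * π * (t / 2 : ℝ≥0)) = √(π * t) := by
    rw [mul_right_comm, two_mul_variance, mul_comm]
  have exponent_sqrt : -(√y - √x) ^ 2 / t = -(x + y) / t + 2 * (√x * √y) / t := by
    rw [sub_sq, sq_sqrt hx, sq_sqrt hy]; ring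
  have exponent_neg_sqrt : -(-√y - √x) ^ 2 / t = -(x + y) / t + -(2 * (√x * √y) / t) := by
    rw [sub_sq, neg_sq, sq_sqrt hx, sq_sqrt hy]; ring
  rw [diffusionKernel, gaussianPDFReal, gaussianPDFReal, prefactor, pdf_constant, two_mul_variance,
    exponent_sqrt, exponent_neg_sqrt, exp_add, exp_add, sqrt_mul hx, cosh_eq]
  ring

section InitialCondition

variable {E : Type*} [NormedAddCommGroup E] [NormedSpace ℝ E] {f : ℝ → E} {C x : ℝ}

theorem integral_diffusionKernel_smul_eq_integral_gaussianReal {t : ℝ≥0} (ht : t ≠ 0) (hx : 0 ≤ x)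
    (hmeas : AEStronglyMeasurable f (volume.restrict (Ioi 0)))
    (hbdd : ∀ᵐ y ∂volume.restrict (Ioi 0), ‖f y‖ ≤ C) :
    ∫ y in Ioi 0, diffusionKernel t x y • f y = ∫ u, f (u ^ 2) ∂gaussianReal √x (t / 2) := by
  have hint : Integrable fun u ↦ gaussianPDFReal √x (t / 2) u • f (u ^ 2) :=
    (integrable_gaussianPDFReal _ _).smul_bdd C
      (hmeas.comp_quasiMeasurePreserving quasiMeasurePreserving_sq_restrict_Ioi)
      (quasiMeasurePreserving_sq_restrict_Ioi.ae hbdd)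
  rw [integral_gaussianReal_eq_integral_smul (by positivity), integral_eq_integral_Ioi_sqrt hint]
  refine setIntegral_congr_fun measurableSet_Ioi fun y hy ↦ ?_
  have hy_nonneg : 0 ≤ y := le_of_lt hy
  simp only [diffusionKernel_eq_gaussianPDFReal hx hy_nonneg, neg_sq, sq_sqrt hy_nonneg, mul_smul,
    add_smul]

theorem diffusionKernel_initial_condition_general [CompleteSpace E] {l : E}
    (hmeas : AEStronglyMeasurable f (volume.restrict (Ioi 0)))
    (hbdd : ∀ᵐ y ∂volume.restrict (Ioi 0), ‖f y‖ ≤ C)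
    (hx : 0 ≤ x) (hlim : Tendsto f (𝓝[Ioi 0] x) (𝓝 l)) :
    Tendsto (fun t ↦ ∫ y in Ioi 0, diffusionKernel t x y • f y) (𝓝[>] 0) (𝓝 l) := by
  have gaussian_limit : Tendsto (fun v : ℝ≥0 ↦ ∫ u, f (u ^ 2) ∂gaussianReal √x v) (𝓝[≠] 0) (𝓝 l) :=
    tendsto_integral_gaussianReal
      (hmeas.comp_quasiMeasurePreserving quasiMeasurePreserving_sq_restrict_Ioi)
      (quasiMeasurePreserving_sq_restrict_Ioi.ae hbdd) (hlim.comp (tendsto_sq_nhdsNE_sqrt hx))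
  have variance_limit : Tendsto (fun t : ℝ ↦ t.toNNReal / 2) (𝓝[>] 0) (𝓝[≠] 0) := by
    refine tendsto_nhdsWithin_iff.2 ⟨?_, ?_⟩
    · have hcont : Continuous fun t : ℝ ↦ t.toNNReal / 2 := by fun_prop
      simpa using (hcont.tendsto 0).mono_left nhdsWithin_le_nhds
    · filter_upwards [self_mem_nhdsWithin] with t ht
      simpa using ht
  refine (gaussian_limit.comp variance_limit).congr' ?_
  filter_upwards [self_mem_nhdsWithin] with t ht
  lift t to ℝ≥0 using le_of_lt ht
  have ht_ne : t ≠ 0 := (NNReal.coe_pos.1 ht).ne'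
  simpa using (integral_diffusionKernel_smul_eq_integral_gaussianReal ht_ne hx hmeas hbdd).symm

end InitialCondition

/-- For a bounded continuous `f : (0,∞) → ℝ` and every `x > 0`, the convolution
`∫₀^∞ K(t,x,y) f(y) dy` converges to `f(x)` as `t → 0⁺`: the diffusion kernel satisfies
the initial condition `K(0,x,y) = δ(x−y)` in the sense of the fundamental solution. -/
theorem diffusionKernel_initial_condition (f : ℝ → ℝ)
    (hcont : ContinuousOn f (Set.Ioi (0 : ℝ)))
    (hbdd : ∃ C : ℝ, ∀ y ∈ Set.Ioi (0 : ℝ), |f y| ≤ C)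
    (x : ℝ) (hx : 0 < x) :
    Tendsto (fun t => ∫ y in Set.Ioi (0 : ℝ), diffusionKernel t x y * f y)
      (𝓝[>] (0 : ℝ)) (𝓝 (f x)) := by
  obtain ⟨C, hC⟩ := hbdd
  exact diffusionKernel_initial_condition_general (hcont.aestronglyMeasurable measurableSet_Ioi)
    (ae_restrict_of_forall_mem measurableSet_Ioi hC) hx.le (hcont x hx)
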